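/- arXiv:math-ph/0702055 — 2 statements merged into one kernel-verified Lean document; each statement's English description precedes it below -/
import Mathlib

section
/- Let Q be a quiver, P the path algebra of its double Q̄ over k, and L = P/[P,P] the k-module with basis the cyclic paths (necklaces) in Q̄. The k-linear map δ_or : L → L ⊗ L defined by δ_or([a₁⋯aₙ]) = Σ_{i < j} ω(a_i, a_j) · ([(a_j)_t a_{j+1}⋯a_{i−1}] ⊗ [(a_i)_t a_{i+1}⋯a_{j−1}] − [(a_i)_t a_{i+1}⋯a_{j−1}] ⊗ [(a_j)_t a_{j+1}⋯a_{i−1}]), with indices taken cyclically modulo n, is a Lie cobracket on L. -/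
/-!
Statement 8: for a quiver `Q`, the map
`δ_or([a₁⋯aₙ]) = Σ_{i<j} ω(a_i,a_j) ([(a_j)_t a_{j+1}⋯a_{i−1}] ⊗ [(a_i)_t a_{i+1}⋯a_{j−1}]
− [(a_i)_t a_{i+1}⋯a_{j−1}] ⊗ [(a_j)_t a_{j+1}⋯a_{i−1}])` is a Lie cobracket on the
necklace module `L = P/[P,P]`, the free `k`-module with basis the cyclic paths in `Q̄`.
-/

open TensorProduct

noncomputable section

section LieCoalg

variable (k : Type*) [CommRing k] (g : Type*) [AddCommGroup g] [Module k g]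

/-- `τ_{(12)}` on `g ⊗ g`. -/
def tau2 : g ⊗[k] g →ₗ[k] g ⊗[k] g := (TensorProduct.comm k g g).toLinearMap

/-- `τ_{(132)}` on the triple tensor product `g ⊗ (g ⊗ g)`: `x⊗y⊗z ↦ y⊗z⊗x`. -/
def tau132 : g ⊗[k] (g ⊗[k] g) →ₗ[k] g ⊗[k] (g ⊗[k] g) :=
  (TensorProduct.assoc k g g g).toLinearMap ∘ₗ
    (TensorProduct.comm k g (g ⊗[k] g)).toLinearMap

/-- `τ_{(123)}` on the triple tensor product: `x⊗y⊗z ↦ z⊗x⊗y`. -/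
def tau123 : g ⊗[k] (g ⊗[k] g) →ₗ[k] g ⊗[k] (g ⊗[k] g) :=
  tau132 k g ∘ₗ tau132 k g

variable {k g}

/-- `(δ ⊗ Id) ∘ δ : g → g ⊗ g ⊗ g` (triple tensor product associated as `g ⊗ (g ⊗ g)`). -/
def leftIter (δ : g →ₗ[k] g ⊗[k] g) : g →ₗ[k] g ⊗[k] (g ⊗[k] g) :=
  ((TensorProduct.assoc k g g g).toLinearMap ∘ₗ LinearMap.rTensor g δ) ∘ₗ δ

/-- `δ : g → g ⊗ g` is a Lie cobracket if `τ_{(12)} ∘ δ = −δ` and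
`(Id + τ_{(123)} + τ_{(132)}) ∘ (δ ⊗ Id) ∘ δ = 0` (co-Jacobi identity). -/
def IsLieCobracket (δ : g →ₗ[k] g ⊗[k] g) : Prop :=
  (tau2 k g) ∘ₗ δ = -δ ∧
  (LinearMap.id + tau123 k g + tau132 k g) ∘ₗ leftIter δ = 0

end LieCoalg

/-! ### Quivers, double quivers, paths and necklaces -/

/-- The arrows of the double quiver `Q̄ = Q ⊔ Q*`: `.inl e = e` and `.inr e = e*`. -/
abbrev Arr (E : Type*) := E ⊕ E

/-- The source `a_s` of an arrow of the double quiver. -/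
def asrc {I E : Type*} (s t : E → I) : Arr E → I
  | .inl e => s e
  | .inr e => t e

/-- The target `a_t` of an arrow of the double quiver. -/
def atgt {I E : Type*} (s t : E → I) : Arr E → I
  | .inl e => t e
  | .inr e => s e

open scoped Classical in
/-- The pairing `ω`: `ω(e,e*) = 1`, `ω(e*,e) = −1` for `e ∈ Q`, and `ω(a,b) = 0`
whenever `b ≠ a*`. -/
def omg (k : Type*) [CommRing k] {E : Type*} : Arr E → Arr E → k
  | .inl e, .inr e' => if e = e' then 1 else 0
  | .inr e, .inl e' => if e = e' then -1 else 0
  | _, _ => 0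

/-- `IsPathFrom s t v l`: `l` is a composable sequence of arrows starting at `v`. -/
def IsPathFrom {I E : Type*} (s t : E → I) : I → List (Arr E) → Prop
  | _, [] => True
  | v, a :: l => asrc s t a = v ∧ IsPathFrom s t (atgt s t a) l

/-- The target of a path. -/
def pathTgt {I E : Type*} (s t : E → I) : I → List (Arr E) → I
  | v, [] => v
  | _, a :: l => pathTgt s t (atgt s t a) l

/-- A path in the double quiver `Q̄`. -/
structure QPath {I E : Type*} (s t : E → I) : Type _ where
  src : I
  arrows : List (Arr E)
  valid : IsPathFrom s t src arrows

/-- A closed path in the double quiver. -/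
structure ClosedQPath {I E : Type*} (s t : E → I) : Type _ where
  path : QPath s t
  closed : pathTgt s t path.src path.arrows = path.src

/-- Rotation of closed paths (moving the initial edge): the equivalence closure of this
relation identifies exactly the closed paths giving the same cyclic path (necklace). -/
def RotRel {I E : Type*} (s t : E → I) (p q : ClosedQPath s t) : Prop :=
  ∃ (a : Arr E) (l : List (Arr E)),
    p.path.arrows = a :: l ∧ q.path.arrows = l ++ [a] ∧ q.path.src = atgt s t a

/-- Necklaces: cyclic paths in the double quiver, i.e. closed paths up to rotation. -/
def Necklace {I E : Type*} (s t : E → I) : Type _ := Quot (RotRel s t)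

variable (k : Type*) [CommRing k] {I E : Type*} (s t : E → I)

/-- `L = P/[P,P]`: the free `k`-module with basis the necklaces (cyclic paths) in `Q̄`. -/
abbrev NeckMod := Necklace s t →₀ k

open scoped Classical in
/-- The basis vector of a necklace presented by a starting vertex and a list of arrows,
or `0` if the data does not define a closed path. -/
def mkN (v : I) (l : List (Arr E)) : NeckMod k s t :=
  if h : IsPathFrom s t v l ∧ pathTgt s t v l = v then
    Finsupp.single (Quot.mk (RotRel s t) ⟨⟨v, l, h.1⟩, h.2⟩) (1 : k) else 0

/-- The summand of `δ_or` for a pair of positions `i < j` of the cyclic path `(v, l)`: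
`ω(a_i,a_j) ([(a_j)_t a_{j+1}⋯a_{i−1}] ⊗ [(a_i)_t a_{i+1}⋯a_{j−1}] − swap)`. -/
def dorTerm (v : I) (l : List (Arr E)) (i j : ℕ) :
    NeckMod k s t ⊗[k] NeckMod k s t :=
  match l[i]?, l[j]? with
  | some a, some b =>
      let inner := mkN k s t (atgt s t a) ((l.drop (i+1)).take (j - i - 1))
      let outer := mkN k s t (atgt s t b) (l.drop (j+1) ++ l.take i)
      omg k a b • (outer ⊗ₜ[k] inner - inner ⊗ₜ[k] outer)
  | _, _ => (0 : k) • (mkN k s t v [] ⊗ₜ[k] mkN k s t v [])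

/-- The necklace Lie cobracket `δ_or` on `L` (computed on a representative closed path;
the result does not depend on the choice of representative). -/
def deltaOr : NeckMod k s t →ₗ[k] NeckMod k s t ⊗[k] NeckMod k s t :=
  Finsupp.lift (NeckMod k s t ⊗[k] NeckMod k s t) k (Necklace s t) fun q =>
    let p := q.out
    ∑ i ∈ Finset.range p.path.arrows.length, ∑ j ∈ Finset.range p.path.arrows.length,
      if i < j then dorTerm k s t p.path.src p.path.arrows i j
      else (0 : k) • dorTerm k s t p.path.src p.path.arrows i j

/-! ### Segments of a sequence of arrows -/

/-- The list `f c, f (c + 1), …, f (c + m - 1)`. -/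
def seg {α : Type*} (f : ℕ → α) (c m : ℕ) : List α :=
  (List.range m).map fun r => f (c + r)

section Seg

variable {α : Type*} (f : ℕ → α)

@[simp] lemma seg_length (c m : ℕ) : (seg f c m).length = m := by simp [seg]

@[simp] lemma seg_zero (c : ℕ) : seg f c 0 = [] := rfl

lemma seg_succ (c m : ℕ) : seg f c (m + 1) = f c :: seg f (c + 1) m := by
  simp [seg, List.range_succ_eq_map, Function.comp_def, add_comm, add_left_comm]

lemma seg_append (c m p : ℕ) : seg f c m ++ seg f (c + m) p = seg f c (m + p) := by
  simp [seg, List.range_add, Function.comp_def, add_assoc]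

lemma seg_drop (c m r : ℕ) : (seg f c m).drop r = seg f (c + r) (m - r) := by
  apply List.ext_getElem
  · simp
  · intro i h1 h2
    simp [seg, add_assoc]

lemma seg_take (c : ℕ) {m r : ℕ} (h : r ≤ m) : (seg f c m).take r = seg f c r := by
  apply List.ext_getElem
  · simpa using h
  · intro i h1 h2
    simp [seg]

lemma seg_getElem? (c : ℕ) {m x : ℕ} (h : x < m) : (seg f c m)[x]? = some (f (c + x)) := by
  simp [seg, h]

lemma seg_add_period {n : ℕ} (hf : Function.Periodic f n) (c m : ℕ) :
    seg f (c + n) m = seg f c m := by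
  unfold seg
  refine List.map_congr_left fun r _ => ?_
  rw [add_right_comm]
  exact hf _

lemma seg_comp_succ (c m : ℕ) : seg (fun r => f (r + 1)) c m = seg f (c + 1) m := by
  unfold seg
  refine List.map_congr_left fun r _ => ?_
  rw [add_right_comm]

lemma exists_periodic_seg (l : List α) (hl : l ≠ []) :
    ∃ f : ℕ → α, Function.Periodic f l.length ∧ l = seg f 0 l.length := by
  have hpos : 0 < l.length := List.length_pos_iff.mpr hl
  refine ⟨fun r => l[r % l.length]'(Nat.mod_lt _ hpos), fun r => by simp, ?_⟩
  apply List.ext_getElem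
  · simp
  · intro i h1 h2
    simp [seg, Nat.mod_eq_of_lt h1]

end Seg

lemma sum_range_periodic {M : Type*} [AddCommMonoid M] {n : ℕ} {H : ℕ → M}
    (hH : Function.Periodic H n) (c : ℕ) :
    ∑ i ∈ Finset.range n, H (i + c) = ∑ i ∈ Finset.range n, H i := by
  induction c with
  | zero => rfl
  | succ c ih =>
    rw [← ih]
    have h : H (n + c) = H (0 + c) := by rw [add_comm n, hH, zero_add]
    rcases n with _ | n
    · simp
    · rw [Finset.sum_range_succ, Finset.sum_range_succ' (fun i => H (i + c))]
      congr 1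
      · exact Finset.sum_congr rfl fun i _ => by congr 1; omega
      · rw [← h]; congr 1; omega

/-! ### The pairing and paths along a sequence of arrows -/

lemma omg_antisymm (a b : Arr E) : omg k a b = -omg k b a := by
  rcases a with a | a <;> rcases b with b | b <;> simp only [omg, neg_zero] <;>
    by_cases h : a = b <;> simp [h, Ne.symm]

lemma atgt_eq_asrc_of_omg_ne_zero {a b : Arr E} (h : omg k a b ≠ 0) :
    atgt s t a = asrc s t b := by
  rcases a with a | a <;> rcases b with b | b <;> simp [omg] at h <;> simp [atgt, asrc, h.1]

lemma asrc_eq_atgt_of_omg_ne_zero {a b : Arr E} (h : omg k a b ≠ 0) :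
    asrc s t a = atgt s t b := by
  rcases a with a | a <;> rcases b with b | b <;> simp [omg] at h <;> simp [atgt, asrc, h.1]

lemma isPathFrom_append (l₁ l₂ : List (Arr E)) (v : I) :
    IsPathFrom s t v (l₁ ++ l₂) ↔
      IsPathFrom s t v l₁ ∧ IsPathFrom s t (pathTgt s t v l₁) l₂ := by
  induction l₁ generalizing v with
  | nil => simp [IsPathFrom, pathTgt]
  | cons a l ih => simp [IsPathFrom, pathTgt, ih, and_assoc]

lemma pathTgt_append (l₁ l₂ : List (Arr E)) (v : I) :
    pathTgt s t v (l₁ ++ l₂) = pathTgt s t (pathTgt s t v l₁) l₂ := by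
  induction l₁ generalizing v with
  | nil => rfl
  | cons a l ih => exact ih _

lemma isPathFrom_seg {f : ℕ → Arr E} (hf : ∀ r, atgt s t (f r) = asrc s t (f (r + 1)))
    (c m : ℕ) : IsPathFrom s t (atgt s t (f c)) (seg f (c + 1) m) := by
  induction m generalizing c with
  | zero => simp [IsPathFrom]
  | succ m ih => rw [seg_succ]; exact ⟨(hf c).symm, ih _⟩

lemma pathTgt_seg (f : ℕ → Arr E) (c m : ℕ) :
    pathTgt s t (atgt s t (f c)) (seg f (c + 1) m) = atgt s t (f (c + m)) := by
  induction m generalizing c with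
  | zero => simp [pathTgt]
  | succ m ih => rw [seg_succ, pathTgt, ih]; congr 2; omega

lemma atgt_eq_asrc_of_isPathFrom_seg {f : ℕ → Arr E} {c m : ℕ} {v : I}
    (h : IsPathFrom s t v (seg f c m)) {r : ℕ} (hr : r + 1 < m) :
    atgt s t (f (c + r)) = asrc s t (f (c + r + 1)) := by
  induction m generalizing c v r with
  | zero => omega
  | succ m ih =>
    rw [seg_succ] at h
    rcases r with _ | r
    · obtain ⟨m, rfl⟩ : ∃ m', m = m' + 1 := ⟨m - 1, by omega⟩
      rw [seg_succ] at h
      exact h.2.1.symm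
    · have := ih h.2 (r := r) (by omega)
      rwa [show c + 1 + r = c + (r + 1) by omega] at this

lemma atgt_eq_asrc_of_closed {f : ℕ → Arr E} {n : ℕ} (hn : 0 < n)
    (hp : Function.Periodic f n) {v : I} (h : IsPathFrom s t v (seg f 0 n))
    (hc : pathTgt s t v (seg f 0 n) = v) (r : ℕ) :
    atgt s t (f r) = asrc s t (f (r + 1)) := by
  have hmod := hp.map_mod_nat
  have hlt := Nat.mod_lt r hn
  by_cases hr : r % n + 1 < n
  · have h1 := atgt_eq_asrc_of_isPathFrom_seg s t h hr
    rw [zero_add, hmod] at h1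
    rw [h1, ← hmod (r + 1), ← hmod (r % n + 1), Nat.mod_add_mod]
  · obtain ⟨m, rfl⟩ : ∃ m', n = m' + 1 := ⟨n - 1, by omega⟩
    rw [seg_succ] at h hc
    rw [pathTgt, pathTgt_seg] at hc
    have h1 : r % (m + 1) = m := by omega
    have h2 : (r + 1) % (m + 1) = 0 := by
      rw [← Nat.mod_add_mod, h1, Nat.mod_self]
    rw [← hmod r, ← hmod (r + 1), h1, h2, h.1, ← hc, zero_add]

/-! ### Reindexing sums over positions of a cyclic word -/

lemma sum_range_cyc {M : Type*} [AddCommMonoid M] (n : ℕ) (F : ℕ → ℕ → M) :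
    ∑ i ∈ Finset.range n, ∑ d ∈ Finset.range (n - 1), F i d =
      ∑ p ∈ (Finset.range n ×ˢ Finset.range n).filter (fun p => p.1 < p.2),
        (F p.1 (p.2 - p.1 - 1) + F p.2 (n + p.1 - p.2 - 1)) := by
  rw [← Finset.sum_product',
    ← Finset.sum_filter_add_sum_filter_not _ (fun p : ℕ × ℕ => p.1 + p.2 + 1 < n),
    Finset.sum_add_distrib]
  congr 1
  · refine Finset.sum_nbij' (fun p => (p.1, p.1 + p.2 + 1)) (fun p => (p.1, p.2 - p.1 - 1))
      ?_ ?_ ?_ ?_ ?_ <;> rintro ⟨a, b⟩ h <;>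
      simp only [Finset.mem_filter, Finset.mem_product, Finset.mem_range, Prod.mk.injEq,
        true_and] at h ⊢
    · omega
    · omega
    · omega
    · omega
    · congr 1; omega
  · refine Finset.sum_nbij' (fun p => (p.1 + p.2 + 1 - n, p.1))
      (fun p => (p.2, n + p.1 - p.2 - 1))
      ?_ ?_ ?_ ?_ ?_ <;> rintro ⟨a, b⟩ h <;>
      simp only [Finset.mem_filter, Finset.mem_product, Finset.mem_range, Prod.mk.injEq,
        and_true, true_and] at h ⊢
    · omega
    · omega
    · omega
    · omega
    · congr 1; omega

/-- The ways to choose two disjoint arcs of a cyclic word of length `n`: the four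
lengths are those of the first arc, the gap after it, the second arc, and the gap after that. -/
def arcQuads (n : ℕ) : Finset (ℕ × ℕ × ℕ × ℕ) :=
  (Finset.range n ×ˢ Finset.range n ×ˢ Finset.range n ×ˢ Finset.range n).filter
    fun q => q.1 + q.2.1 + q.2.2.1 + q.2.2.2 + 4 = n

lemma mem_arcQuads {n d g e h : ℕ} : (d, g, e, h) ∈ arcQuads n ↔ d + g + e + h + 4 = n := by
  simp only [arcQuads, Finset.mem_filter, Finset.mem_product, Finset.mem_range]
  omega

lemma sum_arcQuads {M : Type*} [AddCommMonoid M] (n : ℕ) (F : ℕ → ℕ → ℕ → M) :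
    ∑ d ∈ Finset.range (n - 1),
      ∑ p ∈ (Finset.range (n - d - 2) ×ˢ Finset.range (n - d - 2)).filter (fun p => p.1 < p.2),
        F d p.1 p.2 =
      ∑ q ∈ arcQuads n, F q.1 q.2.1 (q.2.1 + q.2.2.1 + 1) := by
  rw [Finset.sum_sigma']
  refine Finset.sum_nbij' (fun p => (p.1, p.2.1, p.2.2 - p.2.1 - 1, n - p.1 - p.2.2 - 3))
    (fun q => ⟨q.1, q.2.1, q.2.1 + q.2.2.1 + 1⟩) ?_ ?_ ?_ ?_ ?_
  · rintro ⟨d, x, y⟩ h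
    simp only [Finset.mem_sigma, Finset.mem_filter, Finset.mem_product, Finset.mem_range] at h
    rw [mem_arcQuads]
    dsimp only
    omega
  · rintro ⟨d, g, e, h⟩ hq
    rw [mem_arcQuads] at hq
    simp only [Finset.mem_sigma, Finset.mem_filter, Finset.mem_product, Finset.mem_range]
    omega
  · rintro ⟨d, x, y⟩ h
    simp only [Finset.mem_sigma, Finset.mem_filter, Finset.mem_product, Finset.mem_range] at h
    have : x + (y - x - 1) + 1 = y := by omega
    simp [this]
  · rintro ⟨d, g, e, h⟩ hq
    rw [mem_arcQuads] at hq
    simp only [Prod.mk.injEq, true_and]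
    omega
  · rintro ⟨d, x, y⟩ h
    simp only [Finset.mem_sigma, Finset.mem_filter, Finset.mem_product, Finset.mem_range] at h
    have : x + (y - x - 1) + 1 = y := by omega
    simp [this]

/-! ### Cyclic permutations of a triple tensor product -/

lemma tau132_tmul {g : Type*} [AddCommGroup g] [Module k g] (x y z : g) :
    tau132 k g (x ⊗ₜ[k] (y ⊗ₜ[k] z)) = y ⊗ₜ[k] (z ⊗ₜ[k] x) := by
  simp [tau132]

lemma tau132_tau132_tau132 {g : Type*} [AddCommGroup g] [Module k g]
    (u : g ⊗[k] (g ⊗[k] g)) : tau132 k g (tau132 k g (tau132 k g u)) = u := by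
  suffices tau132 k g ∘ₗ tau132 k g ∘ₗ tau132 k g = LinearMap.id from
    LinearMap.congr_fun this u
  refine TensorProduct.ext' fun x w => ?_
  induction w with
  | zero => simp
  | tmul y z => simp [tau132_tmul]
  | add a b ha hb => simp only [TensorProduct.tmul_add, map_add, ha, hb]

lemma cyclic_sum_sub_tau123 {g : Type*} [AddCommGroup g] [Module k g]
    (u : g ⊗[k] (g ⊗[k] g)) :
    (LinearMap.id + tau123 k g + tau132 k g : g ⊗[k] (g ⊗[k] g) →ₗ[k] g ⊗[k] (g ⊗[k] g))
      (u - tau123 k g u) = 0 := by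
  simp only [tau123, LinearMap.add_apply, LinearMap.id_apply, LinearMap.comp_apply, map_sub,
    tau132_tau132_tau132]
  abel

section Cobracket

/-! ### The cobracket on representatives -/

variable {L : Type*} (N : I → List (Arr E) → L)

/-- The necklace class of the path `f (c + 1), …, f (c + m)`. -/
def arc (f : ℕ → Arr E) (c m : ℕ) : L :=
  N (atgt s t (f c)) (seg f (c + 1) m)

lemma arc_add_period {f : ℕ → Arr E} {n : ℕ} (hf : Function.Periodic f n) (c m : ℕ) :
    arc s t N f (c + n) m = arc s t N f c m := by
  unfold arc
  rw [hf, add_right_comm, seg_add_period f hf]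

variable [AddCommGroup L] [Module k L]

/-- The summand of `δ_or` for a pair of positions `i < j` of the word `l`, where `N v l` is the
class of the cyclic path `l` based at `v`. -/
def pairTerm (l : List (Arr E)) (i j : ℕ) : L ⊗[k] L :=
  match l[i]?, l[j]? with
  | some a, some b =>
      let inner := N (atgt s t a) ((l.drop (i + 1)).take (j - i - 1))
      let outer := N (atgt s t b) (l.drop (j + 1) ++ l.take i)
      omg k a b • (outer ⊗ₜ[k] inner - inner ⊗ₜ[k] outer)
  | _, _ => 0

/-- The value of `δ_or` computed on the word `l` of a closed path. -/
def pairSum (l : List (Arr E)) : L ⊗[k] L :=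
  ∑ p ∈ (Finset.range l.length ×ˢ Finset.range l.length).filter (fun p => p.1 < p.2),
    pairTerm k s t N l p.1 p.2

lemma tau2_pairSum (l : List (Arr E)) :
    tau2 k L (pairSum k s t N l) = -pairSum k s t N l := by
  rw [pairSum, map_sum, ← Finset.sum_neg_distrib]
  refine Finset.sum_congr rfl fun p _ => ?_
  unfold pairTerm
  split
  · simp only [tau2, LinearEquiv.coe_coe, map_smul, map_sub, TensorProduct.comm_tmul,
      ← smul_neg, neg_sub]
  · simp

/-- The summand of `δ_or` at the ordered pair of positions `i`, `i + d + 1` of the cyclic word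
of length `n` given by `f`. -/
def cycTerm (f : ℕ → Arr E) (n i d : ℕ) : L ⊗[k] L :=
  omg k (f i) (f (i + d + 1)) •
    (arc s t N f (i + d + 1) (n - d - 2) ⊗ₜ[k] arc s t N f i d)

lemma cycTerm_periodic {f : ℕ → Arr E} {n : ℕ} (hf : Function.Periodic f n) (d : ℕ) :
    Function.Periodic (fun i => cycTerm k s t N f n i d) n := by
  intro i
  have h : i + n + d + 1 = i + d + 1 + n := by omega
  simp only [cycTerm, h, hf _, arc_add_period s t N hf]

lemma pairTerm_seg (f : ℕ → Arr E) (c : ℕ) {m x y : ℕ} (hxy : x < y) (hy : y < m) :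
    pairTerm k s t N (seg f c m) x y =
      omg k (f (c + x)) (f (c + y)) •
        (N (atgt s t (f (c + y))) (seg f (c + y + 1) (m - y - 1) ++ seg f c x)
            ⊗ₜ[k] arc s t N f (c + x) (y - x - 1) -
          arc s t N f (c + x) (y - x - 1) ⊗ₜ[k]
            N (atgt s t (f (c + y)))
              (seg f (c + y + 1) (m - y - 1) ++ seg f c x)) := by
  unfold pairTerm
  rw [seg_getElem? f c (hxy.trans hy), seg_getElem? f c hy]
  simp only [seg_drop]
  rw [seg_take f c (by omega : x ≤ m), seg_take f _ (by omega : y - x - 1 ≤ m - (x + 1))]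
  simp only [arc, Nat.sub_sub, add_assoc]

lemma pairSum_seg {f : ℕ → Arr E} {n : ℕ} (hf : Function.Periodic f n) :
    pairSum k s t N (seg f 0 n) =
      ∑ i ∈ Finset.range n, ∑ d ∈ Finset.range (n - 1), cycTerm k s t N f n i d := by
  rw [sum_range_cyc, pairSum, seg_length]
  refine Finset.sum_congr rfl ?_
  rintro ⟨i, j⟩ h
  simp only [Finset.mem_filter, Finset.mem_product, Finset.mem_range] at h
  obtain ⟨⟨hi, hj⟩, hij⟩ := h
  rw [pairTerm_seg k s t N f 0 hij hj]
  have hseg : seg f (j + 1) (n - j - 1) ++ seg f 0 i = seg f (j + 1) (n + i - j - 1) := by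
    rw [← seg_add_period f hf 0 i, show 0 + n = j + 1 + (n - j - 1) by omega, seg_append]
    congr 1; omega
  have e1 : i + (j - i - 1) + 1 = j := by omega
  have e2 : n - (j - i - 1) - 2 = n + i - j - 1 := by omega
  have e3 : j + (n + i - j - 1) + 1 = i + n := by omega
  have e4 : n - (n + i - j - 1) - 2 = j - i - 1 := by omega
  simp only [zero_add, hseg, cycTerm, e1, e2, e3, e4, hf _, arc_add_period s t N hf]
  rw [omg_antisymm k (f j) (f i), neg_smul, ← sub_eq_add_neg, smul_sub]
  rfl

lemma pairSum_rotate (a : Arr E) (l : List (Arr E)) :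
    pairSum k s t N (a :: l) = pairSum k s t N (l ++ [a]) := by
  obtain ⟨f, hf, hl⟩ := exists_periodic_seg (a :: l) (by simp)
  set n := (a :: l).length with hn
  have hn' : n = l.length + 1 := rfl
  have hl2 : l ++ [a] = seg (fun r => f (r + 1)) 0 n := by
    rw [seg_comp_succ]
    rw [hn', seg_succ] at hl
    injection hl with h1 h2
    have h3 := seg_append f (0 + 1) l.length 1
    rw [hn', ← h3, ← h2]
    congr 1
    rw [seg_succ, seg_zero, h1, ← hf 0, show 0 + n = 0 + 1 + l.length by omega]
  have hf2 : Function.Periodic (fun r => f (r + 1)) n := fun r => by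
    have := hf (r + 1)
    rwa [add_right_comm] at this
  have hterm : ∀ i d, cycTerm k s t N (fun r => f (r + 1)) n i d =
      cycTerm k s t N f n (i + 1) d := by
    intro i d
    simp only [cycTerm, arc, seg_comp_succ]
    rw [show i + 1 + d + 1 = i + d + 1 + 1 by omega]
  rw [hl, hl2, pairSum_seg k s t N hf, pairSum_seg k s t N hf2, Finset.sum_comm,
    Finset.sum_comm (s := Finset.range n)]
  refine Finset.sum_congr rfl fun d _ => ?_
  simp only [hterm]
  exact (sum_range_periodic (cycTerm_periodic k s t N hf d) 1).symm

/-! ### The co-Jacobi identity -/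

/-- The two gaps between the arcs `i + 1, …, i + d` and `x + 1, …, x + e` joined to a necklace,
where `x = i + d + g + 2`. -/
def gapNeck (f : ℕ → Arr E) (i d g e h : ℕ) : L :=
  N (atgt s t (f (i + d + g + e + 3)))
    (seg f (i + d + g + e + 4) h ++ seg f (i + d + 2) g)

/-- The scalar attached to two disjoint arcs. -/
def arcCoeff (f : ℕ → Arr E) (i d g e : ℕ) : k :=
  omg k (f i) (f (i + d + 1)) * omg k (f (i + d + g + 2)) (f (i + d + g + e + 3))

/-- The summand `gaps ⊗ second arc ⊗ first arc` of the iterated cobracket. -/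
def tripleTerm (f : ℕ → Arr E) (i : ℕ) (q : ℕ × ℕ × ℕ × ℕ) :
    L ⊗[k] (L ⊗[k] L) :=
  arcCoeff k f i q.1 q.2.1 q.2.2.1 •
    (gapNeck s t N f i q.1 q.2.1 q.2.2.1 q.2.2.2 ⊗ₜ[k]
      (arc s t N f (i + q.1 + q.2.1 + 2) q.2.2.1 ⊗ₜ[k] arc s t N f i q.1))

lemma tripleTerm_periodic {f : ℕ → Arr E} {n : ℕ} (hf : Function.Periodic f n)
    (q : ℕ × ℕ × ℕ × ℕ) : Function.Periodic (fun i => tripleTerm k s t N f i q) n := by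
  intro i
  obtain ⟨d, g, e, h⟩ := q
  have e1 : i + n + d + 1 = i + d + 1 + n := by omega
  have e2 : i + n + d + 2 = i + d + 2 + n := by omega
  have e3 : i + n + d + g + 2 = i + d + g + 2 + n := by omega
  have e4 : i + n + d + g + e + 3 = i + d + g + e + 3 + n := by omega
  have e5 : i + n + d + g + e + 4 = i + d + g + e + 4 + n := by omega
  simp only [tripleTerm, arcCoeff, gapNeck, e1, e2, e3, e4, e5, hf _, seg_add_period f hf,
    arc_add_period s t N hf]

lemma tau123_tripleTerm_swap
    (hN : ∀ l₁ l₂ v w, IsPathFrom s t v l₁ → pathTgt s t v l₁ = w →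
      IsPathFrom s t w l₂ → pathTgt s t w l₂ = v → N v (l₁ ++ l₂) = N w (l₂ ++ l₁))
    {f : ℕ → Arr E} {n : ℕ} (hp : Function.Periodic f n)
    (hf : ∀ r, atgt s t (f r) = asrc s t (f (r + 1))) (i : ℕ) {d g e h : ℕ}
    (hn : d + g + e + h + 4 = n) :
    tau123 k _ (tripleTerm k s t N f (i + (d + g + 2)) (e, h, d, g)) =
      arcCoeff k f i d g e •
        (arc s t N f (i + d + g + 2) e ⊗ₜ[k]
          (gapNeck s t N f i d g e h ⊗ₜ[k] arc s t N f i d)) := by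
  have c1 : i + (d + g + 2) + e + 1 = i + d + g + e + 3 := by omega
  have c2 : i + (d + g + 2) + e + 2 = i + d + g + e + 4 := by omega
  have c3 : i + (d + g + 2) + e + h + 2 = i + n := by omega
  have c4 : i + (d + g + 2) + e + h + d + 3 = i + d + 1 + n := by omega
  have c5 : i + (d + g + 2) + e + h + d + 4 = i + d + 2 + n := by omega
  have c6 : i + (d + g + 2) = i + d + g + 2 := by omega
  simp only [tripleTerm, tau123, LinearMap.comp_apply, map_smul, tau132_tmul, arcCoeff, gapNeck,
    c1, c2, c3, c4, c5, hp _, arc_add_period s t N hp, seg_add_period f hp]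
  rw [c6, mul_comm]
  by_cases h1 : omg k (f i) (f (i + d + 1)) = 0
  · simp [h1]
  by_cases h2 : omg k (f (i + d + g + 2)) (f (i + d + g + e + 3)) = 0
  · simp [h2]
  congr 3
  refine hN _ _ _ _ (isPathFrom_seg s t hf _ _) ?_ (isPathFrom_seg s t hf _ _) ?_
  · rw [pathTgt_seg, hf, ← asrc_eq_atgt_of_omg_ne_zero k s t h2]
    congr 2; omega
  · rw [pathTgt_seg, hf, ← asrc_eq_atgt_of_omg_ne_zero k s t h1, ← hp i]
    congr 2; omega

lemma assoc_rTensor_cycTerm {δ : L →ₗ[k] L ⊗[k] L}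
    (hδ : ∀ v l, IsPathFrom s t v l → pathTgt s t v l = v → δ (N v l) = pairSum k s t N l)
    {f : ℕ → Arr E} {n : ℕ} (hp : Function.Periodic f n)
    (hf : ∀ r, atgt s t (f r) = asrc s t (f (r + 1))) (i : ℕ) {d : ℕ} (hd : d + 2 ≤ n) :
    (TensorProduct.assoc k _ _ _) (LinearMap.rTensor _ δ (cycTerm k s t N f n i d)) =
      ∑ p ∈ (Finset.range (n - d - 2) ×ˢ Finset.range (n - d - 2)).filter (fun p => p.1 < p.2),
        omg k (f i) (f (i + d + 1)) •
          (TensorProduct.assoc k _ _ _)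
            (pairTerm k s t N (seg f (i + d + 1 + 1) (n - d - 2)) p.1 p.2
              ⊗ₜ[k] arc s t N f i d) := by
  by_cases h1 : omg k (f i) (f (i + d + 1)) = 0
  · simp [cycTerm, h1]
  have hc : δ (arc s t N f (i + d + 1) (n - d - 2)) =
      pairSum k s t N (seg f (i + d + 1 + 1) (n - d - 2)) := by
    refine hδ _ _ (isPathFrom_seg s t hf _ _) ?_
    rw [pathTgt_seg, hf, ← asrc_eq_atgt_of_omg_ne_zero k s t h1, ← hp i]
    congr 2; omega
  rw [cycTerm, map_smul, LinearMap.rTensor_tmul, hc, pairSum, seg_length,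
    TensorProduct.sum_tmul, map_smul, map_sum, Finset.smul_sum]

lemma assoc_rTensor_sum_cycTerm
    (hN : ∀ l₁ l₂ v w, IsPathFrom s t v l₁ → pathTgt s t v l₁ = w →
      IsPathFrom s t w l₂ → pathTgt s t w l₂ = v → N v (l₁ ++ l₂) = N w (l₂ ++ l₁))
    {δ : L →ₗ[k] L ⊗[k] L}
    (hδ : ∀ v l, IsPathFrom s t v l → pathTgt s t v l = v → δ (N v l) = pairSum k s t N l)
    {f : ℕ → Arr E} {n : ℕ} (hp : Function.Periodic f n)
    (hf : ∀ r, atgt s t (f r) = asrc s t (f (r + 1))) :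
    (TensorProduct.assoc k _ _ _) (LinearMap.rTensor _ δ
      (∑ i ∈ Finset.range n, ∑ d ∈ Finset.range (n - 1), cycTerm k s t N f n i d)) =
      ∑ i ∈ Finset.range n, ∑ q ∈ arcQuads n, tripleTerm k s t N f i q -
        tau123 k _ (∑ i ∈ Finset.range n, ∑ q ∈ arcQuads n, tripleTerm k s t N f i q) := by
  have hswap : tau123 k _ (∑ i ∈ Finset.range n, ∑ q ∈ arcQuads n, tripleTerm k s t N f i q) =
      ∑ i ∈ Finset.range n, ∑ q ∈ arcQuads n,
        tau123 k _ (tripleTerm k s t N f (i + (q.1 + q.2.1 + 2))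
          (q.2.2.1, q.2.2.2, q.1, q.2.1)) := by
    simp only [map_sum]
    rw [Finset.sum_comm, Finset.sum_comm (s := Finset.range n)]
    refine Finset.sum_nbij' (fun q => (q.2.2.1, q.2.2.2, q.1, q.2.1))
      (fun q => (q.2.2.1, q.2.2.2, q.1, q.2.1)) ?_ ?_ (fun _ _ => rfl) (fun _ _ => rfl) ?_
    · rintro ⟨d, g, e, h⟩ hq
      rw [mem_arcQuads] at hq ⊢
      dsimp only
      omega
    · rintro ⟨d, g, e, h⟩ hq
      rw [mem_arcQuads] at hq ⊢
      dsimp only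
      omega
    · rintro ⟨d, g, e, h⟩ -
      rw [← map_sum, ← map_sum]
      exact congrArg _ (sum_range_periodic (tripleTerm_periodic k s t N hp _) _).symm
  rw [hswap, ← Finset.sum_sub_distrib]
  simp only [map_sum]
  refine Finset.sum_congr rfl fun i _ => ?_
  rw [← Finset.sum_sub_distrib]
  rw [Finset.sum_congr rfl fun d hd => assoc_rTensor_cycTerm k s t N hδ hp hf i
    (by have := Finset.mem_range.mp hd; omega : d + 2 ≤ n)]
  rw [sum_arcQuads n fun d x y => omg k (f i) (f (i + d + 1)) •
          (TensorProduct.assoc k _ _ _)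
            (pairTerm k s t N (seg f (i + d + 1 + 1) (n - d - 2)) x y
              ⊗ₜ[k] arc s t N f i d)]
  refine Finset.sum_congr rfl ?_
  rintro ⟨d, g, e, h⟩ hq
  rw [mem_arcQuads] at hq
  dsimp only
  rw [tau123_tripleTerm_swap k s t N hN hp hf i hq,
    pairTerm_seg k s t N f _ (by omega : g < g + e + 1) (by omega : g + e + 1 < n - d - 2)]
  have c1 : i + d + 1 + 1 + g = i + d + g + 2 := by omega
  have c2 : i + d + 1 + 1 + (g + e + 1) = i + d + g + e + 3 := by omega
  have c3 : n - d - 2 - (g + e + 1) - 1 = h := by omega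
  have c4 : g + e + 1 - g - 1 = e := by omega
  rw [c1, c2, c3, c4]
  simp only [tripleTerm, arcCoeff, gapNeck, TensorProduct.smul_tmul', TensorProduct.sub_tmul,
    map_sub, TensorProduct.assoc_tmul, smul_smul, smul_sub]

/-- A cobracket computed by `pairSum` on a spanning family of closed path classes is a Lie
cobracket. -/
theorem isLieCobracket_of_pairSum
    (hN : ∀ l₁ l₂ v w, IsPathFrom s t v l₁ → pathTgt s t v l₁ = w →
      IsPathFrom s t w l₂ → pathTgt s t w l₂ = v → N v (l₁ ++ l₂) = N w (l₂ ++ l₁))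
    {δ : L →ₗ[k] L ⊗[k] L}
    (hδ : ∀ v l, IsPathFrom s t v l → pathTgt s t v l = v → δ (N v l) = pairSum k s t N l)
    (hspan : Submodule.span k
      {x | ∃ v l, IsPathFrom s t v l ∧ pathTgt s t v l = v ∧ N v l = x} = ⊤) :
    IsLieCobracket δ := by
  constructor
  · refine LinearMap.ext_on hspan ?_
    rintro _ ⟨v, l, hv, hc, rfl⟩
    rw [LinearMap.comp_apply, LinearMap.neg_apply, hδ v l hv hc, tau2_pairSum]
  · refine LinearMap.ext_on hspan ?_
    rintro _ ⟨v, l, hv, hc, rfl⟩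
    simp only [leftIter, LinearMap.comp_apply, LinearMap.zero_apply, LinearEquiv.coe_coe]
    rw [hδ v l hv hc]
    rcases eq_or_ne l [] with rfl | hl
    · simp [pairSum]
    · obtain ⟨f, hp, hlf⟩ := exists_periodic_seg l hl
      generalize hn : l.length = n at hp hlf
      have hpos : 0 < n := hn ▸ List.length_pos_iff.mpr hl
      subst hlf
      rw [pairSum_seg k s t N hp,
        assoc_rTensor_sum_cycTerm k s t N hN hδ hp
          (atgt_eq_asrc_of_closed s t hpos hp hv hc)]
      exact cyclic_sum_sub_tau123 k _

end Cobracket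

/-! ### The necklace module -/

lemma mkN_rotate (l₁ l₂ : List (Arr E)) (v w : I) (h₁ : IsPathFrom s t v l₁)
    (h₁' : pathTgt s t v l₁ = w) (h₂ : IsPathFrom s t w l₂) (h₂' : pathTgt s t w l₂ = v) :
    mkN k s t v (l₁ ++ l₂) = mkN k s t w (l₂ ++ l₁) := by
  induction l₁ generalizing v l₂ with
  | nil =>
    obtain rfl : v = w := h₁'
    simp
  | cons a l ih =>
    have hl : IsPathFrom s t w (l₂ ++ [a]) := by
      rw [isPathFrom_append, h₂']
      exact ⟨h₂, h₁.1, trivial⟩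
    have hl' : pathTgt s t w (l₂ ++ [a]) = atgt s t a := by
      rw [pathTgt_append]; rfl
    have key := ih (l₂ ++ [a]) (atgt s t a) h₁.2 h₁' hl hl'
    rw [List.append_assoc, List.singleton_append] at key
    rw [← key]
    have e1 : IsPathFrom s t v (a :: l ++ l₂) ∧ pathTgt s t v (a :: l ++ l₂) = v := by
      rw [isPathFrom_append, pathTgt_append, h₁']
      exact ⟨⟨h₁, h₂⟩, h₂'⟩
    have e2 : IsPathFrom s t (atgt s t a) (l ++ (l₂ ++ [a])) ∧
        pathTgt s t (atgt s t a) (l ++ (l₂ ++ [a])) = atgt s t a := by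
      rw [isPathFrom_append, pathTgt_append]
      rw [show pathTgt s t (atgt s t a) l = w from h₁']
      exact ⟨⟨h₁.2, hl⟩, hl'⟩
    unfold mkN
    rw [dif_pos e1, dif_pos e2]
    congr 1
    exact Quot.sound ⟨a, l ++ l₂, rfl, by simp, rfl⟩

lemma deltaOr_single_mk (p : ClosedQPath s t) :
    deltaOr k s t (Finsupp.single (Quot.mk (RotRel s t) p : Necklace s t) 1) =
      pairSum k s t (mkN k s t) p.path.arrows := by
  have hterm : ∀ (v : I) (l : List (Arr E)) (i j : ℕ),
      dorTerm k s t v l i j = pairTerm k s t (mkN k s t) l i j := by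
    intro v l i j
    unfold dorTerm pairTerm
    split
    · rfl
    · exact zero_smul _ _
  have hsum : ∀ q : Necklace s t, deltaOr k s t (Finsupp.single q 1) =
      pairSum k s t (mkN k s t) (Quot.out q).path.arrows := by
    intro q
    refine Eq.trans (Finsupp.sum_single_index ?_) ((one_smul k _).trans ?_)
    · exact zero_smul k _
    simp only [zero_smul, hterm]
    exact (Finset.sum_product' _ _ _).symm.trans (Finset.sum_filter _ _).symm
  have hrot : ∀ p q : ClosedQPath s t, RotRel s t p q →
      pairSum k s t (mkN k s t) p.path.arrows = pairSum k s t (mkN k s t) q.path.arrows := by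
    rintro p q ⟨a, l, hp, hq, -⟩
    rw [hp, hq]
    exact pairSum_rotate k s t _ a l
  refine (hsum _).trans ?_
  exact congrArg (Quot.lift (fun p : ClosedQPath s t => pairSum k s t (mkN k s t) p.path.arrows)
    hrot) (Quot.out_eq (Quot.mk (RotRel s t) p))

lemma mkN_of_closed {v : I} {l : List (Arr E)} (h : IsPathFrom s t v l)
    (h' : pathTgt s t v l = v) :
    mkN k s t v l = Finsupp.single (Quot.mk (RotRel s t) ⟨⟨v, l, h⟩, h'⟩ : Necklace s t) 1 :=
  dif_pos ⟨h, h'⟩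

lemma span_mkN : Submodule.span k
    {x | ∃ v l, IsPathFrom s t v l ∧ pathTgt s t v l = v ∧ mkN k s t v l = x} = ⊤ := by
  rw [eq_top_iff]
  rintro x -
  induction x using Finsupp.induction_linear with
  | zero => exact Submodule.zero_mem _
  | add a b ha hb => exact Submodule.add_mem _ ha hb
  | single q c =>
    rw [← Finsupp.smul_single_one]
    refine Submodule.smul_mem _ c (Submodule.subset_span ?_)
    obtain ⟨⟨⟨v, l, hv⟩, hc⟩, rfl⟩ := Quot.exists_rep q
    exact ⟨v, l, hv, hc, mkN_of_closed k s t hv hc⟩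

/-- `δ_or` is a Lie cobracket on `L`. -/
theorem deltaOr_isLieCobracket : IsLieCobracket (deltaOr k s t) := by
  refine isLieCobracket_of_pairSum k s t (mkN k s t) (mkN_rotate k s t) ?_ (span_mkN k s t)
  intro v l h h'
  rw [mkN_of_closed k s t h h']
  exact deltaOr_single_mk k s t _

end
end

section
/- Let Q be a quiver. The k-linear map δ_{p,rt} : Ch_rt → Ch_rt ⊗ Ch_rt defined by δ_{p,rt}((X,H)) = Σ_{c = (i,j) ∈ H} −ω(a_i, a_j) X_{c,1} ⊗ X_{c,2} is a (left) pre-Lie comultiplication, so (Ch_rt, δ_{p,rt}) is a pre-Lie coalgebra. -/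
/-!
Statement 13: for a quiver `Q`, the chord algebra `Ch_rt` (the free `k`-module with
basis the path chord diagrams `(X,H)`, `X` a path in the double quiver `Q̄` and `H` a cut
of `X`), equipped with `δ_{p,rt}((X,H)) = Σ_{c=(i,j)∈H} −ω(a_i,a_j) X_{c,1} ⊗ X_{c,2}`,
is a pre-Lie coalgebra.
-/

open TensorProduct

noncomputable section

section PreLie

variable (k : Type*) [CommRing k] (g : Type*) [AddCommGroup g] [Module k g]

/-- `τ_{(12)}` on the triple tensor product `g ⊗ (g ⊗ g)`: `x⊗y⊗z ↦ y⊗x⊗z`. -/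
def tau12 : g ⊗[k] (g ⊗[k] g) →ₗ[k] g ⊗[k] (g ⊗[k] g) :=
  (TensorProduct.assoc k g g g).toLinearMap ∘ₗ
    (LinearMap.rTensor g (TensorProduct.comm k g g).toLinearMap) ∘ₗ
    (TensorProduct.assoc k g g g).symm.toLinearMap

variable {k g}

/-- `δ₀ : g → g ⊗ g` is a (left) pre-Lie comultiplication if
`(Id − τ_{(12)}) ∘ (δ₀ ⊗ Id − Id ⊗ δ₀) ∘ δ₀ = 0`. -/
def IsPreLieComul (δ : g →ₗ[k] g ⊗[k] g) : Prop :=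
  (LinearMap.id - tau12 k g) ∘ₗ
      (((TensorProduct.assoc k g g g).toLinearMap ∘ₗ LinearMap.rTensor g δ)
        - LinearMap.lTensor g δ) ∘ₗ δ = 0

end PreLie

/-- The involution `a ↦ a*` on arrows of the double quiver (with `(e*)* = e`). -/
def astar {E : Type*} : Arr E → Arr E
  | .inl e => .inr e
  | .inr e => .inl e

/-! ### Cuts of paths -/

/-- A cut of a path with arrow list `l` (0-indexed): a set `H` of pairs `(i,j)` of
positions such that all the involved positions are distinct, `i < j` for each pair, the
pairs do not cross, and for each pair `{a_i, a_j} = {e, e*}` for some arrow `e ∈ Q`. -/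
def IsCut {E : Type*} (l : List (Arr E)) (H : Finset (ℕ × ℕ)) : Prop :=
  (∀ c ∈ H, c.1 < c.2 ∧ c.2 < l.length ∧
    ∃ e : E, (l[c.1]? = some (.inl e) ∧ l[c.2]? = some (.inr e)) ∨
             (l[c.1]? = some (.inr e) ∧ l[c.2]? = some (.inl e))) ∧
  (∀ c ∈ H, ∀ c' ∈ H, c ≠ c' →
    c.1 ≠ c'.1 ∧ c.1 ≠ c'.2 ∧ c.2 ≠ c'.1 ∧ c.2 ≠ c'.2) ∧
  ¬ ∃ c ∈ H, ∃ c' ∈ H, c.1 < c'.1 ∧ c'.1 < c.2 ∧ c.2 < c'.2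

/-- No pair of a cut is nested inside another: together with `IsCut` this defines
simple cuts of paths. -/
def NoNest (H : Finset (ℕ × ℕ)) : Prop :=
  ¬ ∃ c ∈ H, ∃ c' ∈ H, c.1 < c'.1 ∧ c'.2 < c.2

/-- A simple cut of a path: a cut in which no pair is nested inside another. -/
def IsSimpleCut {E : Type*} (l : List (Arr E)) (H : Finset (ℕ × ℕ)) : Prop :=
  IsCut l H ∧ NoNest H

/-- The sign `ε` contributed by one pair of a cut: `−ω(a_i, a_j)`. -/
def epsFactor (k : Type*) [CommRing k] {E : Type*} (l : List (Arr E)) (c : ℕ × ℕ) : k :=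
  match l[c.1]?, l[c.2]? with
  | some a, some b => -(omg k a b)
  | _, _ => 0

/-- The sign `ε_H = ∏_ℓ (−ω(a_{i_ℓ}, a_{j_ℓ}))` of a cut. -/
def epsH (k : Type*) [CommRing k] {E : Type*} (l : List (Arr E)) (H : Finset (ℕ × ℕ)) :
    k := ∏ c ∈ H, epsFactor k l c

/-- The chords of `H` lying strictly inside the chord `(i,j)`, reindexed along the path
`a_{i+1} ⋯ a_{j−1}`. -/
def insideCut (H : Finset (ℕ × ℕ)) (i j : ℕ) : Finset (ℕ × ℕ) :=
  (H.filter (fun c' => i < c'.1 ∧ c'.2 < j)).image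
    (fun c' => (c'.1 - (i+1), c'.2 - (i+1)))

/-- The chords of `H` other than `(i,j)` not lying inside the chord `(i,j)`, reindexed
along the path `a₁ ⋯ a_{i−1} a_{j+1} ⋯ a_n`. -/
def outsideCut (H : Finset (ℕ × ℕ)) (i j : ℕ) : Finset (ℕ × ℕ) :=
  ((H.erase (i, j)).filter (fun c' => ¬ (i < c'.1 ∧ c'.2 < j))).image
    (fun c' => (if j < c'.1 then c'.1 - (j - i + 1) else c'.1,
                if j < c'.2 then c'.2 - (j - i + 1) else c'.2))

variable (k : Type*) [CommRing k] {I E : Type*} (s t : E → I)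

/-- Path chord diagrams `(X, H)`: a path `X` in `Q̄` together with a cut `H` of `X`. -/
def PCD : Type _ := {x : QPath s t × Finset (ℕ × ℕ) // IsCut x.1.arrows x.2}

/-- The chord algebra `Ch_rt`: the free `k`-module with basis the path chord
diagrams. -/
abbrev ChRt := PCD s t →₀ k

open scoped Classical in
/-- The basis vector of a path chord diagram, or `0` if the data is not a path chord
diagram. -/
def mkCD (v : I) (l : List (Arr E)) (H : Finset (ℕ × ℕ)) : ChRt k s t :=
  if h : IsPathFrom s t v l ∧ IsCut l H then
    Finsupp.single ⟨(⟨v, l, h.1⟩, H), h.2⟩ (1 : k) else 0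

/-- The summand of `δ_{p,rt}` on `Ch_rt` corresponding to the chord `c = (i,j)`:
`−ω(a_i,a_j) X_{c,1} ⊗ X_{c,2}`, where `X_{c,1}` is the chord diagram on
`(a_i)_t a_{i+1}⋯a_{j−1}` with the chords nested inside `c` and `X_{c,2}` is the chord
diagram on `a₁⋯a_{i−1} (a_j)_t a_{j+1}⋯a_n` with the chords outside `c`. -/
def chTerm (x : PCD s t) (c : ℕ × ℕ) : ChRt k s t ⊗[k] ChRt k s t :=
  let v := x.1.1.src
  let l := x.1.1.arrows
  let H := x.1.2
  match l[c.1]?, l[c.2]? with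
  | some a, some b =>
      (-(omg k a b)) •
        (mkCD k s t (atgt s t a) ((l.drop (c.1+1)).take (c.2 - c.1 - 1))
            (insideCut H c.1 c.2) ⊗ₜ[k]
          mkCD k s t v (l.take c.1 ++ l.drop (c.2+1)) (outsideCut H c.1 c.2))
  | _, _ => (0 : k) • (mkCD k s t v [] ∅ ⊗ₜ[k] mkCD k s t v [] ∅)

/-- The pre-Lie comultiplication `δ_{p,rt}` on the chord algebra `Ch_rt`. -/
def deltaCh : ChRt k s t →ₗ[k] ChRt k s t ⊗[k] ChRt k s t :=
  Finsupp.lift (ChRt k s t ⊗[k] ChRt k s t) k (PCD s t) fun x =>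
    ∑ c ∈ x.1.2, chTerm k s t x c

section ChordReindexing

/-- The arrows strictly between positions `i` and `j`. -/
def innerArrows {E : Type*} (l : List (Arr E)) (i j : ℕ) : List (Arr E) :=
  (l.drop (i + 1)).take (j - i - 1)

/-- The arrows outside the interval of positions from `i` to `j`. -/
def outerArrows {E : Type*} (l : List (Arr E)) (i j : ℕ) : List (Arr E) :=
  l.take i ++ l.drop (j + 1)

/-- The position of the `n`-th arrow of `outerArrows l i j` in `l`. -/
def outerPos (i j n : ℕ) : ℕ := if n < i then n else n + (j - i + 1)

/-- The position in `outerArrows l i j` of the `n`-th arrow of `l`. -/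
def outerIdx (i j n : ℕ) : ℕ := if j < n then n - (j - i + 1) else n

theorem innerArrows_getElem? {E : Type*} (l : List (Arr E)) (i j n : ℕ) :
    (innerArrows l i j)[n]? = if n + (i + 1) < j then l[n + (i + 1)]? else none := by
  unfold innerArrows
  rw [List.getElem?_take, List.getElem?_drop, add_comm (i + 1) n]
  split_ifs <;> first | rfl | omega

theorem outerArrows_getElem? {E : Type*} {l : List (Arr E)} {i j : ℕ} (hij : i < j)
    (hj : j < l.length) (n : ℕ) : (outerArrows l i j)[n]? = l[outerPos i j n]? := by
  unfold outerArrows outerPos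
  have hlen : (l.take i).length = i := by simp; omega
  split_ifs with h
  · rw [List.getElem?_append_left (by omega), List.getElem?_take, if_pos h]
  · rw [List.getElem?_append_right (by omega), List.getElem?_drop, hlen]
    congr 1
    omega

theorem outerPos_strictMono (i j : ℕ) : StrictMono (outerPos i j) := by
  intro a b hab
  unfold outerPos
  split_ifs <;> omega

theorem isPathFrom_iff {I E : Type*} {s t : E → I} {v : I} {l : List (Arr E)} :
    IsPathFrom s t v l ↔ (∀ a, l[0]? = some a → asrc s t a = v) ∧
      ∀ n a b, l[n]? = some a → l[n + 1]? = some b → asrc s t b = atgt s t a := by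
  induction l generalizing v with
  | nil => simp [IsPathFrom]
  | cons a l ih =>
    rw [IsPathFrom, ih]
    constructor
    · rintro ⟨h, h0, h1⟩
      refine ⟨by simpa using h, fun n => ?_⟩
      cases n with
      | zero => intro b c hb hc; simp at hb hc; subst hb; exact h0 _ (by simpa using hc)
      | succ n => intro b c hb hc; exact h1 n b c (by simpa using hb) (by simpa using hc)
    · rintro ⟨h, h1⟩
      exact ⟨h a (by simp), fun b hb => h1 0 a b (by simp) (by simpa using hb),
        fun n b c hb hc => h1 (n + 1) b c (by simpa using hb) (by simpa using hc)⟩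

namespace IsCut

variable {E : Type*} {l : List (Arr E)} {H : Finset (ℕ × ℕ)} {c d : ℕ × ℕ}

theorem fst_lt_snd (h : IsCut l H) (hc : c ∈ H) : c.1 < c.2 := (h.1 c hc).1

theorem snd_lt_length (h : IsCut l H) (hc : c ∈ H) : c.2 < l.length := (h.1 c hc).2.1

/-- Two distinct chords of a cut are nested or disjoint. -/
theorem nested_or_disjoint (h : IsCut l H) (hc : c ∈ H) (hd : d ∈ H) (hne : c ≠ d) :
    (c.1 < d.1 ∧ d.2 < c.2) ∨ (d.1 < c.1 ∧ c.2 < d.2) ∨ c.2 < d.1 ∨ d.2 < c.1 := by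
  have h1 := h.fst_lt_snd hc
  have h2 := h.fst_lt_snd hd
  have h3 := h.2.1 c hc d hd hne
  have h4 : ¬ (c.1 < d.1 ∧ d.1 < c.2 ∧ c.2 < d.2) := fun e => h.2.2 ⟨c, hc, d, hd, e⟩
  have h5 : ¬ (d.1 < c.1 ∧ c.1 < d.2 ∧ d.2 < c.2) := fun e => h.2.2 ⟨d, hd, c, hc, e⟩
  omega

theorem mem_insideCut (h : IsCut l H) {i j : ℕ} {x : ℕ × ℕ} :
    x ∈ insideCut H i j ↔ (x.1 + (i + 1), x.2 + (i + 1)) ∈ H ∧ x.2 + (i + 1) < j := by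
  unfold insideCut
  simp only [Finset.mem_image, Finset.mem_filter]
  constructor
  · rintro ⟨c, ⟨hc, h1, h2⟩, rfl⟩
    have := h.fst_lt_snd hc
    have e1 : c.1 - (i + 1) + (i + 1) = c.1 := by omega
    have e2 : c.2 - (i + 1) + (i + 1) = c.2 := by omega
    simp only [e1, e2]
    exact ⟨hc, h2⟩
  · rintro ⟨hx, h2⟩
    exact ⟨_, ⟨hx, by simp only; omega, h2⟩, by simp⟩

theorem mem_outsideCut (h : IsCut l H) {i j : ℕ} (hij : (i, j) ∈ H) {x : ℕ × ℕ} :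
    x ∈ outsideCut H i j ↔ (outerPos i j x.1, outerPos i j x.2) ∈ H := by
  have hlt : i < j := h.fst_lt_snd hij
  unfold outsideCut outerPos
  simp only [Finset.mem_image, Finset.mem_filter, Finset.mem_erase]
  constructor
  · rintro ⟨c, ⟨⟨hne, hc⟩, h1⟩, rfl⟩
    have h0 := h.fst_lt_snd hc
    have h2 := h.nested_or_disjoint hc hij hne
    simp only at h2
    convert hc using 1
    ext <;> simp only <;> split_ifs <;> omega
  · intro hx
    refine ⟨_, ⟨⟨?_, hx⟩, ?_⟩, ?_⟩
    · intro e
      simp only [Prod.mk.injEq] at e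
      split_ifs at e <;> omega
    · have := h.fst_lt_snd hx
      simp only at this ⊢
      split_ifs at this ⊢ <;> omega
    · ext <;> simp only <;> split_ifs <;> omega

/-- Restriction of a cut along a strictly monotone map of positions. -/
theorem comap (h : IsCut l H) {l' : List (Arr E)} {H' : Finset (ℕ × ℕ)} {f : ℕ → ℕ}
    (hf : StrictMono f)
    (hmem : ∀ x ∈ H', (f x.1, f x.2) ∈ H ∧ l'[x.1]? = l[f x.1]? ∧ l'[x.2]? = l[f x.2]?) :
    IsCut l' H' := by
  refine ⟨fun x hx => ?_, fun x hx y hy hne => ?_, ?_⟩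
  · obtain ⟨h1, h2, h3⟩ := hmem x hx
    obtain ⟨h4, h5, h6⟩ := h.1 _ h1
    refine ⟨hf.lt_iff_lt.1 h4, ?_, by rw [h2, h3]; exact h6⟩
    by_contra hlen
    rw [List.getElem?_eq_none (by omega), List.getElem?_eq_getElem h5] at h3
    simp at h3
  · have := h.2.1 _ (hmem x hx).1 _ (hmem y hy).1
      (fun e => hne (Prod.ext (hf.injective (congrArg Prod.fst e))
        (hf.injective (congrArg Prod.snd e))))
    simpa only [ne_eq, hf.injective.eq_iff] using this
  · rintro ⟨x, hx, y, hy, h1, h2, h3⟩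
    exact h.2.2 ⟨_, (hmem x hx).1, _, (hmem y hy).1, hf h1, hf h2, hf h3⟩

theorem insideCut (h : IsCut l H) (i j : ℕ) :
    IsCut (innerArrows l i j) (insideCut H i j) := by
  refine h.comap (f := fun n => n + (i + 1)) (fun a b hab => by simpa using hab)
    fun x hx => ?_
  obtain ⟨hx, h2⟩ := h.mem_insideCut.1 hx
  have := h.fst_lt_snd hx
  simp only at this
  exact ⟨hx, by rw [innerArrows_getElem?, if_pos (by omega)],
    by rw [innerArrows_getElem?, if_pos (by omega)]⟩

theorem outsideCut (h : IsCut l H) {i j : ℕ} (hij : (i, j) ∈ H) :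
    IsCut (outerArrows l i j) (outsideCut H i j) :=
  h.comap (outerPos_strictMono i j) fun _ hx =>
    ⟨(h.mem_outsideCut hij).1 hx,
      outerArrows_getElem? (h.fst_lt_snd hij) (h.snd_lt_length hij) _,
      outerArrows_getElem? (h.fst_lt_snd hij) (h.snd_lt_length hij) _⟩

/-- The two arrows of a chord are opposite. -/
theorem exists_arrows (h : IsCut l H) (hc : c ∈ H) : ∃ a b, l[c.1]? = some a ∧
    l[c.2]? = some b ∧ b = astar a := by
  obtain ⟨-, -, e, ⟨h1, h2⟩ | ⟨h1, h2⟩⟩ := h.1 c hc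
  · exact ⟨_, _, h1, h2, rfl⟩
  · exact ⟨_, _, h1, h2, rfl⟩

end IsCut

end ChordReindexing

section Reindexing

variable {I E : Type*} {s t : E → I}

theorem atgt_astar (a : Arr E) : atgt s t (astar a) = asrc s t a := by
  cases a <;> rfl

variable (s t) in
/-- The target of the `n`-th arrow of `l` (and `v` if there is no such arrow). -/
def tgtAt (v : I) (l : List (Arr E)) (n : ℕ) : I := (l[n]?.map (atgt s t)).getD v

theorem tgtAt_congr {v w : I} {l l' : List (Arr E)} {m n : ℕ} (hn : n < l.length)
    (h : l'[m]? = l[n]?) : tgtAt s t w l' m = tgtAt s t v l n := by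
  simp [tgtAt, h, List.getElem?_eq_getElem hn]

theorem IsPathFrom.innerArrows {v : I} {l : List (Arr E)} (h : IsPathFrom s t v l) {i j : ℕ}
    (hi : i < l.length) : IsPathFrom s t (tgtAt s t v l i) (innerArrows l i j) := by
  rw [isPathFrom_iff] at h ⊢
  refine ⟨fun a ha => ?_, fun n a b ha hb => ?_⟩
  · rw [innerArrows_getElem?] at ha
    split_ifs at ha
    rw [h.2 i l[i] a (List.getElem?_eq_getElem hi) (by simpa using ha)]
    simp [tgtAt, hi]
  · rw [innerArrows_getElem?] at ha hb
    split_ifs at ha hb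
    exact h.2 _ a b ha (by rw [← hb]; congr 1; omega)

theorem IsPathFrom.outerArrows {v : I} {l : List (Arr E)} (h : IsPathFrom s t v l)
    {H : Finset (ℕ × ℕ)} (hH : IsCut l H) {i j : ℕ} (hij : (i, j) ∈ H) :
    IsPathFrom s t v (outerArrows l i j) := by
  rw [isPathFrom_iff] at h ⊢
  have h1 := hH.fst_lt_snd hij
  have h2 := hH.snd_lt_length hij
  obtain ⟨a', b', ha', hb', rfl⟩ := hH.exists_arrows hij
  simp only at h1 h2 ha' hb'
  refine ⟨fun a ha => ?_, fun n a b ha hb => ?_⟩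
  · rw [outerArrows_getElem? h1 h2, outerPos] at ha
    split_ifs at ha with hi
    · exact h.1 a ha
    · obtain rfl : i = 0 := by omega
      rw [h.2 j _ a hb' (by rw [← ha]; congr 1; omega), atgt_astar]
      exact h.1 _ ha'
  · rw [outerArrows_getElem? h1 h2, outerPos] at ha hb
    split_ifs at ha hb with hn hn'
    · exact h.2 _ a b ha hb
    · obtain rfl : i = n + 1 := by omega
      rw [h.2 j _ b hb' (by rw [← hb]; congr 1; omega), atgt_astar]
      exact h.2 _ _ _ ha ha'
    · omega
    · exact h.2 _ a b ha (by rw [← hb]; congr 1; omega)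

/-! ### Cutting along two chords -/

variable {l : List (Arr E)} {H : Finset (ℕ × ℕ)} {c d : ℕ × ℕ}

theorem innerArrows_innerArrows (h₁ : c.1 < d.1) (h₂ : d.2 < c.2) :
    innerArrows (innerArrows l c.1 c.2) (d.1 - (c.1 + 1)) (d.2 - (c.1 + 1)) =
      innerArrows l d.1 d.2 := by
  ext1 n
  simp only [innerArrows_getElem?]
  split_ifs <;> first | omega | rfl | (congr 1; omega)

theorem insideCut_insideCut (hH : IsCut l H) (h₁ : c.1 < d.1) (h₂ : d.2 < c.2) :
    insideCut (insideCut H c.1 c.2) (d.1 - (c.1 + 1)) (d.2 - (c.1 + 1)) =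
      insideCut H d.1 d.2 := by
  ext x
  rw [(hH.insideCut _ _).mem_insideCut, hH.mem_insideCut, hH.mem_insideCut]
  have e (n : ℕ) : n + (d.1 - (c.1 + 1) + 1) + (c.1 + 1) = n + (d.1 + 1) := by omega
  simp only [e]
  grind

theorem insideCut_mem (hd : d ∈ H) (h₁ : c.1 < d.1) (h₂ : d.2 < c.2) :
    (d.1 - (c.1 + 1), d.2 - (c.1 + 1)) ∈ insideCut H c.1 c.2 :=
  Finset.mem_image_of_mem (fun x : ℕ × ℕ => (x.1 - (c.1 + 1), x.2 - (c.1 + 1)))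
    (Finset.mem_filter.2 ⟨hd, h₁, h₂⟩)

theorem outsideCut_mem (hd : d ∈ H) (hne : d ≠ c) (h : ¬ (c.1 < d.1 ∧ d.2 < c.2)) :
    (outerIdx c.1 c.2 d.1, outerIdx c.1 c.2 d.2) ∈ outsideCut H c.1 c.2 :=
  Finset.mem_image_of_mem
    (fun x : ℕ × ℕ => (outerIdx c.1 c.2 x.1, outerIdx c.1 c.2 x.2))
    (Finset.mem_filter.2 ⟨Finset.mem_erase.2 ⟨hne, hd⟩, h⟩)

theorem outerArrows_getElem?_outerIdx (hH : IsCut l H) (hc : c ∈ H) {n : ℕ}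
    (h : n < c.1 ∨ c.2 < n) :
    (outerArrows l c.1 c.2)[outerIdx c.1 c.2 n]? = l[n]? := by
  have := hH.fst_lt_snd hc
  rw [outerArrows_getElem? this (hH.snd_lt_length hc)]
  congr 1
  unfold outerIdx outerPos
  split_ifs <;> omega

theorem innerArrows_outerArrows_of_nested (hH : IsCut l H) (hd : d ∈ H)
    (h₁ : c.1 < d.1) (h₂ : d.2 < c.2) :
    innerArrows (outerArrows l d.1 d.2) (outerIdx d.1 d.2 c.1) (outerIdx d.1 d.2 c.2) =
      outerArrows (innerArrows l c.1 c.2) (d.1 - (c.1 + 1)) (d.2 - (c.1 + 1)) := by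
  have hlt := hH.fst_lt_snd hd
  have hm := insideCut_mem hd h₁ h₂
  have hI := hH.insideCut c.1 c.2
  ext1 n
  rw [innerArrows_getElem?, outerArrows_getElem? hlt (hH.snd_lt_length hd),
    outerArrows_getElem? (hI.fst_lt_snd hm) (hI.snd_lt_length hm), innerArrows_getElem?]
  unfold outerIdx outerPos
  split_ifs <;> first | omega | rfl | (congr 1; omega)

theorem insideCut_outsideCut_of_nested (hH : IsCut l H) (hd : d ∈ H)
    (h₁ : c.1 < d.1) (h₂ : d.2 < c.2) :
    insideCut (outsideCut H d.1 d.2) (outerIdx d.1 d.2 c.1) (outerIdx d.1 d.2 c.2) =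
      outsideCut (insideCut H c.1 c.2) (d.1 - (c.1 + 1)) (d.2 - (c.1 + 1)) := by
  have hlt := hH.fst_lt_snd hd
  have hm := insideCut_mem hd h₁ h₂
  have hI := hH.insideCut c.1 c.2
  ext x
  rw [(hH.outsideCut hd).mem_insideCut, hH.mem_outsideCut hd, hI.mem_outsideCut hm,
    hH.mem_insideCut]
  have e (n : ℕ) : outerPos d.1 d.2 (n + (outerIdx d.1 d.2 c.1 + 1)) =
      outerPos (d.1 - (c.1 + 1)) (d.2 - (c.1 + 1)) n + (c.1 + 1) := by
    unfold outerIdx outerPos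
    split_ifs <;> omega
  have e' (n : ℕ) : n + (outerIdx d.1 d.2 c.1 + 1) < outerIdx d.1 d.2 c.2 ↔
      outerPos (d.1 - (c.1 + 1)) (d.2 - (c.1 + 1)) n + (c.1 + 1) < c.2 := by
    unfold outerIdx outerPos
    split_ifs <;> omega
  simp only [e, e']

theorem outerPos_outerPos_of_nested (hH : IsCut l H) (hd : d ∈ H)
    (h₁ : c.1 < d.1) (h₂ : d.2 < c.2) (n : ℕ) :
    outerPos d.1 d.2 (outerPos (outerIdx d.1 d.2 c.1) (outerIdx d.1 d.2 c.2) n) =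
      outerPos c.1 c.2 n := by
  have := hH.fst_lt_snd hd
  unfold outerIdx outerPos
  split_ifs <;> omega

theorem outsideCut_mem_of_nested (hc : c ∈ H)
    (h₁ : c.1 < d.1) (h₂ : d.2 < c.2) :
    (outerIdx d.1 d.2 c.1, outerIdx d.1 d.2 c.2) ∈ outsideCut H d.1 d.2 :=
  outsideCut_mem hc (by rintro rfl; omega) (by omega)

theorem outerArrows_outerArrows_of_nested (hH : IsCut l H) (hc : c ∈ H) (hd : d ∈ H)
    (h₁ : c.1 < d.1) (h₂ : d.2 < c.2) :
    outerArrows (outerArrows l d.1 d.2) (outerIdx d.1 d.2 c.1) (outerIdx d.1 d.2 c.2) =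
      outerArrows l c.1 c.2 := by
  have hm := outsideCut_mem_of_nested hc h₁ h₂
  have hO := hH.outsideCut hd
  ext1 n
  rw [outerArrows_getElem? (hO.fst_lt_snd hm) (hO.snd_lt_length hm),
    outerArrows_getElem? (hH.fst_lt_snd hd) (hH.snd_lt_length hd),
    outerArrows_getElem? (hH.fst_lt_snd hc) (hH.snd_lt_length hc),
    outerPos_outerPos_of_nested hH hd h₁ h₂]

theorem outsideCut_outsideCut_of_nested (hH : IsCut l H) (hc : c ∈ H) (hd : d ∈ H)
    (h₁ : c.1 < d.1) (h₂ : d.2 < c.2) :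
    outsideCut (outsideCut H d.1 d.2) (outerIdx d.1 d.2 c.1) (outerIdx d.1 d.2 c.2) =
      outsideCut H c.1 c.2 := by
  ext x
  rw [(hH.outsideCut hd).mem_outsideCut (outsideCut_mem_of_nested hc h₁ h₂),
    hH.mem_outsideCut hd, hH.mem_outsideCut hc]
  simp only [outerPos_outerPos_of_nested hH hd h₁ h₂]

theorem outsideCut_mem_of_disjoint (hH : IsCut l H) (hc : c ∈ H) (hd : d ∈ H)
    (h : c.2 < d.1 ∨ d.2 < c.1) :
    (outerIdx c.1 c.2 d.1, outerIdx c.1 c.2 d.2) ∈ outsideCut H c.1 c.2 := by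
  have := hH.fst_lt_snd hc
  have := hH.fst_lt_snd hd
  exact outsideCut_mem hd (by rintro rfl; omega) (by omega)

theorem innerArrows_outerArrows_of_disjoint (hH : IsCut l H) (hc : c ∈ H) (hd : d ∈ H)
    (h : c.2 < d.1 ∨ d.2 < c.1) :
    innerArrows (outerArrows l c.1 c.2) (outerIdx c.1 c.2 d.1) (outerIdx c.1 c.2 d.2) =
      innerArrows l d.1 d.2 := by
  have hc' := hH.fst_lt_snd hc
  have hd' := hH.fst_lt_snd hd
  ext1 n
  rw [innerArrows_getElem?, outerArrows_getElem? hc' (hH.snd_lt_length hc),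
    innerArrows_getElem?]
  unfold outerIdx outerPos
  split_ifs <;> first | omega | rfl | (congr 1; omega)

theorem insideCut_outsideCut_of_disjoint (hH : IsCut l H) (hc : c ∈ H) (hd : d ∈ H)
    (h : c.2 < d.1 ∨ d.2 < c.1) :
    insideCut (outsideCut H c.1 c.2) (outerIdx c.1 c.2 d.1) (outerIdx c.1 c.2 d.2) =
      insideCut H d.1 d.2 := by
  have hc' := hH.fst_lt_snd hc
  have hd' := hH.fst_lt_snd hd
  ext x
  rw [(hH.outsideCut hc).mem_insideCut, hH.mem_outsideCut hc, hH.mem_insideCut]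
  have e' (n : ℕ) : n + (outerIdx c.1 c.2 d.1 + 1) < outerIdx c.1 c.2 d.2 ↔
      n + (d.1 + 1) < d.2 := by
    unfold outerIdx
    split_ifs <;> omega
  have e (n : ℕ) (hn : n + (d.1 + 1) < d.2) :
      outerPos c.1 c.2 (n + (outerIdx c.1 c.2 d.1 + 1)) = n + (d.1 + 1) := by
    unfold outerIdx outerPos
    split_ifs <;> omega
  rw [e']
  refine and_congr_left fun h2 => ?_
  rw [e _ h2]
  by_cases h1 : x.1 < x.2
  · rw [e _ (by omega)]
  · refine iff_of_false (fun hx => h1 ?_) (fun hx => h1 ?_)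
    · have h3 := hH.fst_lt_snd hx
      simp only [← e _ h2, (outerPos_strictMono _ _).lt_iff_lt] at h3
      omega
    · have h3 := hH.fst_lt_snd hx
      simp only at h3
      omega

theorem outerPos_outerPos_of_disjoint (hH : IsCut l H) (hc : c ∈ H) (hd : d ∈ H)
    (h : c.2 < d.1 ∨ d.2 < c.1) (n : ℕ) :
    outerPos c.1 c.2 (outerPos (outerIdx c.1 c.2 d.1) (outerIdx c.1 c.2 d.2) n) =
      outerPos d.1 d.2 (outerPos (outerIdx d.1 d.2 c.1) (outerIdx d.1 d.2 c.2) n) := by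
  have hc' := hH.fst_lt_snd hc
  have hd' := hH.fst_lt_snd hd
  unfold outerIdx outerPos
  split_ifs <;> omega

theorem outerArrows_outerArrows_comm (hH : IsCut l H) (hc : c ∈ H) (hd : d ∈ H)
    (h : c.2 < d.1 ∨ d.2 < c.1) :
    outerArrows (outerArrows l c.1 c.2) (outerIdx c.1 c.2 d.1) (outerIdx c.1 c.2 d.2) =
      outerArrows (outerArrows l d.1 d.2) (outerIdx d.1 d.2 c.1)
        (outerIdx d.1 d.2 c.2) := by
  have hm := outsideCut_mem_of_disjoint hH hc hd h
  have hm' := outsideCut_mem_of_disjoint hH hd hc h.symm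
  have hO := hH.outsideCut hc
  have hO' := hH.outsideCut hd
  ext1 n
  rw [outerArrows_getElem? (hO.fst_lt_snd hm) (hO.snd_lt_length hm),
    outerArrows_getElem? (hH.fst_lt_snd hc) (hH.snd_lt_length hc),
    outerArrows_getElem? (hO'.fst_lt_snd hm') (hO'.snd_lt_length hm'),
    outerArrows_getElem? (hH.fst_lt_snd hd) (hH.snd_lt_length hd),
    outerPos_outerPos_of_disjoint hH hc hd h]

theorem outsideCut_outsideCut_comm (hH : IsCut l H) (hc : c ∈ H) (hd : d ∈ H)
    (h : c.2 < d.1 ∨ d.2 < c.1) :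
    outsideCut (outsideCut H c.1 c.2) (outerIdx c.1 c.2 d.1) (outerIdx c.1 c.2 d.2) =
      outsideCut (outsideCut H d.1 d.2) (outerIdx d.1 d.2 c.1)
        (outerIdx d.1 d.2 c.2) := by
  ext x
  rw [(hH.outsideCut hc).mem_outsideCut (outsideCut_mem_of_disjoint hH hc hd h),
    (hH.outsideCut hd).mem_outsideCut (outsideCut_mem_of_disjoint hH hd hc h.symm),
    hH.mem_outsideCut hc, hH.mem_outsideCut hd]
  simp only [outerPos_outerPos_of_disjoint hH hc hd h]

theorem sum_insideCut {M : Type*} [AddCommMonoid M] (hH : IsCut l H) (i j : ℕ)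
    (F : ℕ × ℕ → M) : ∑ d ∈ insideCut H i j, F d =
      ∑ d ∈ H with i < d.1 ∧ d.2 < j, F (d.1 - (i + 1), d.2 - (i + 1)) := by
  rw [insideCut, Finset.sum_image]
  intro d hd d' hd' h
  simp only [Finset.coe_filter, Set.mem_ofPred_eq] at hd hd'
  have := hH.fst_lt_snd hd.1
  have := hH.fst_lt_snd hd'.1
  simp only [Prod.mk.injEq] at h
  ext <;> omega

theorem sum_outsideCut {M : Type*} [AddCommMonoid M] (hH : IsCut l H) (hc : c ∈ H)
    (F : ℕ × ℕ → M) : ∑ d ∈ outsideCut H c.1 c.2, F d =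
      ∑ d ∈ H with d.1 < c.1 ∧ c.2 < d.2, F (outerIdx c.1 c.2 d.1, outerIdx c.1 c.2 d.2) +
      ∑ d ∈ H with c.2 < d.1 ∨ d.2 < c.1, F (outerIdx c.1 c.2 d.1, outerIdx c.1 c.2 d.2) := by
  have hlt := hH.fst_lt_snd hc
  have hsplit : (H.erase (c.1, c.2)).filter (fun d => ¬ (c.1 < d.1 ∧ d.2 < c.2)) =
      (H.filter fun d => d.1 < c.1 ∧ c.2 < d.2).disjUnion
        (H.filter fun d => c.2 < d.1 ∨ d.2 < c.1)
        (Finset.disjoint_filter.2 fun d hd h h' => by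
          have := hH.fst_lt_snd hd
          omega) := by
    ext d
    simp only [Finset.mem_filter, Finset.mem_erase, Finset.mem_disjUnion]
    constructor
    · rintro ⟨⟨hne, hd⟩, h⟩
      have := hH.nested_or_disjoint hc hd (Ne.symm hne)
      simp only [hd, true_and]
      omega
    · rintro (⟨hd, h⟩ | ⟨hd, h⟩)
      all_goals
        have := hH.fst_lt_snd hd
        refine ⟨⟨?_, hd⟩, by omega⟩
        rintro rfl
        simp only at *
        omega
  rw [outsideCut, Finset.sum_image, hsplit, Finset.sum_disjUnion]
  · rfl
  · rw [hsplit]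
    intro d hd d' hd' h
    have key {x : ℕ × ℕ} (hx : x ∈ H) (h : x.1 < c.1 ∧ c.2 < x.2 ∨ c.2 < x.1 ∨ x.2 < c.1) :
        x = (outerPos c.1 c.2 (outerIdx c.1 c.2 x.1),
          outerPos c.1 c.2 (outerIdx c.1 c.2 x.2)) := by
      have := hH.fst_lt_snd hx
      unfold outerPos outerIdx
      ext <;> simp only <;> split_ifs <;> omega
    simp only [Finset.mem_coe, Finset.mem_disjUnion, Finset.mem_filter, ← and_or_left] at hd hd'
    rw [key hd.1 hd.2, key hd'.1 hd'.2]
    exact congrArg (fun x : ℕ × ℕ => (outerPos c.1 c.2 x.1, outerPos c.1 c.2 x.2)) h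

end Reindexing

section PreLie

variable {k g : Type*} [CommRing k] [AddCommGroup g] [Module k g]

theorem tau12_tmul (x y z : g) :
    tau12 k g (x ⊗ₜ[k] (y ⊗ₜ[k] z)) = y ⊗ₜ[k] (x ⊗ₜ[k] z) := rfl

/-- A comultiplication is pre-Lie if, on a generating family, its coassociator is symmetric in
the first two factors. -/
theorem isPreLieComul_of_span_eq_top {ι : Type*} {δ : g →ₗ[k] g ⊗[k] g} {b : ι → g}
    (hb : Submodule.span k (Set.range b) = ⊤) (R : ι → g ⊗[k] (g ⊗[k] g))
    (hR : ∀ i, TensorProduct.assoc k g g g (LinearMap.rTensor g δ (δ (b i))) + R i =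
      LinearMap.lTensor g δ (δ (b i))) (hτ : ∀ i, tau12 k g (R i) = R i) :
    IsPreLieComul δ := by
  refine LinearMap.ext_on_range hb fun i => ?_
  simp only [LinearMap.comp_apply, LinearMap.sub_apply, LinearEquiv.coe_coe, ← hR i,
    LinearMap.id_apply, LinearMap.zero_apply, sub_add_cancel_left, map_neg, hτ i, sub_self,
    neg_zero]

end PreLie

section Comultiplication

/-- The diagram `X_{c,1}` cut off by the chord `c` of `(l, H)`. -/
def innerCD (v : I) (l : List (Arr E)) (H : Finset (ℕ × ℕ)) (c : ℕ × ℕ) : ChRt k s t :=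
  mkCD k s t (tgtAt s t v l c.1) (innerArrows l c.1 c.2) (insideCut H c.1 c.2)

/-- The diagram `X_{c,2}` left over by the chord `c` of `(l, H)`. -/
def outerCD (v : I) (l : List (Arr E)) (H : Finset (ℕ × ℕ)) (c : ℕ × ℕ) : ChRt k s t :=
  mkCD k s t v (outerArrows l c.1 c.2) (outsideCut H c.1 c.2)

/-- The diagram between the chord `c` and the chord `d` nested inside `c`. -/
def midCD (v : I) (l : List (Arr E)) (H : Finset (ℕ × ℕ)) (d c : ℕ × ℕ) : ChRt k s t :=
  outerCD k s t (tgtAt s t v l c.1) (innerArrows l c.1 c.2) (insideCut H c.1 c.2)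
    (d.1 - (c.1 + 1), d.2 - (c.1 + 1))

/-- The diagram left over by two disjoint chords `c` and `d`. -/
def outerCD₂ (v : I) (l : List (Arr E)) (H : Finset (ℕ × ℕ)) (c d : ℕ × ℕ) : ChRt k s t :=
  outerCD k s t v (outerArrows l c.1 c.2) (outsideCut H c.1 c.2)
    (outerIdx c.1 c.2 d.1, outerIdx c.1 c.2 d.2)

variable {k s t} {v : I} {l : List (Arr E)} {H : Finset (ℕ × ℕ)}

theorem epsFactor_congr {l l' : List (Arr E)} {c c' : ℕ × ℕ} (h₁ : l'[c'.1]? = l[c.1]?)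
    (h₂ : l'[c'.2]? = l[c.2]?) : epsFactor k l' c' = epsFactor k l c := by
  simp only [epsFactor, h₁, h₂]

theorem mkCD_eq_single (x : PCD s t) :
    mkCD k s t x.1.1.src x.1.1.arrows x.1.2 = Finsupp.single x 1 :=
  dif_pos ⟨x.1.1.valid, x.2⟩

theorem deltaCh_single (x : PCD s t) :
    deltaCh k s t (Finsupp.single x 1) = ∑ c ∈ x.1.2, chTerm k s t x c := by
  rw [deltaCh, Finsupp.lift_apply]
  refine (Finsupp.sum_single_index ?_).trans ?_
  · exact zero_smul _ _
  · exact one_smul _ _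

theorem deltaCh_mkCD (hl : IsPathFrom s t v l) (hH : IsCut l H) :
    deltaCh k s t (mkCD k s t v l H) =
      ∑ c ∈ H, epsFactor k l c • (innerCD k s t v l H c ⊗ₜ[k] outerCD k s t v l H c) := by
  have hx := (congrArg (deltaCh k s t) (mkCD_eq_single ⟨(⟨v, l, hl⟩, H), hH⟩)).trans
    (deltaCh_single _)
  refine hx.trans (Finset.sum_congr rfl fun c hc => ?_)
  obtain ⟨a, b, ha, hb, -⟩ := hH.exists_arrows hc
  simp only [chTerm, epsFactor, innerCD, outerCD, tgtAt, ha, hb]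
  rfl

theorem deltaCh_innerCD (hl : IsPathFrom s t v l) (hH : IsCut l H) {c : ℕ × ℕ} (hc : c ∈ H) :
    deltaCh k s t (innerCD k s t v l H c) =
      ∑ d ∈ H with c.1 < d.1 ∧ d.2 < c.2,
        epsFactor k l d • (innerCD k s t v l H d ⊗ₜ[k] midCD k s t v l H d c) := by
  have hlen : c.1 < l.length := (hH.fst_lt_snd hc).trans (hH.snd_lt_length hc)
  rw [innerCD, deltaCh_mkCD (hl.innerArrows hlen) (hH.insideCut _ _), sum_insideCut hH]
  refine Finset.sum_congr rfl fun d hd => ?_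
  obtain ⟨hd, h₁, h₂⟩ := Finset.mem_filter.1 hd
  have hlt := hH.fst_lt_snd hd
  have hget (n : ℕ) (hn : c.1 < n) (hn' : n < c.2) :
      (innerArrows l c.1 c.2)[n - (c.1 + 1)]? = l[n]? := by
    rw [innerArrows_getElem?, if_pos (by omega)]
    congr 1
    omega
  rw [epsFactor_congr (hget _ h₁ (by omega)) (hget _ (by omega) h₂)]
  congr 2
  rw [innerCD, innerCD, innerArrows_innerArrows h₁ h₂, insideCut_insideCut hH h₁ h₂,
    tgtAt_congr (hlt.trans (hH.snd_lt_length hd)) (hget _ h₁ (by omega))]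

theorem deltaCh_outerCD (hl : IsPathFrom s t v l) (hH : IsCut l H) {c : ℕ × ℕ} (hc : c ∈ H) :
    deltaCh k s t (outerCD k s t v l H c) =
      ∑ d ∈ H with d.1 < c.1 ∧ c.2 < d.2,
        epsFactor k l d • (midCD k s t v l H c d ⊗ₜ[k] outerCD k s t v l H d) +
      ∑ d ∈ H with c.2 < d.1 ∨ d.2 < c.1,
        epsFactor k l d • (innerCD k s t v l H d ⊗ₜ[k] outerCD₂ k s t v l H c d) := by
  have hlt := hH.fst_lt_snd hc
  rw [outerCD, deltaCh_mkCD (hl.outerArrows hH hc) (hH.outsideCut hc), sum_outsideCut hH hc]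
  congr 1
  · refine Finset.sum_congr rfl fun d hd => ?_
    obtain ⟨hd, h₁, h₂⟩ := Finset.mem_filter.1 hd
    have g₁ := outerArrows_getElem?_outerIdx hH hc (n := d.1) (by omega)
    have g₂ := outerArrows_getElem?_outerIdx hH hc (n := d.2) (by omega)
    rw [epsFactor_congr g₁ g₂]
    congr 2
    · rw [midCD, outerCD, innerCD, innerArrows_outerArrows_of_nested hH hc h₁ h₂,
        insideCut_outsideCut_of_nested hH hc h₁ h₂,
        tgtAt_congr ((hH.fst_lt_snd hd).trans (hH.snd_lt_length hd)) g₁]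
    · rw [outerCD, outerCD, outerArrows_outerArrows_of_nested hH hd hc h₁ h₂,
        outsideCut_outsideCut_of_nested hH hd hc h₁ h₂]
  · refine Finset.sum_congr rfl fun d hd => ?_
    obtain ⟨hd, h⟩ := Finset.mem_filter.1 hd
    have := hH.fst_lt_snd hd
    have g₁ := outerArrows_getElem?_outerIdx hH hc (n := d.1) (by omega)
    have g₂ := outerArrows_getElem?_outerIdx hH hc (n := d.2) (by omega)
    rw [epsFactor_congr g₁ g₂]
    congr 2
    rw [innerCD, innerCD, innerArrows_outerArrows_of_disjoint hH hc hd h,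
      insideCut_outsideCut_of_disjoint hH hc hd h,
      tgtAt_congr ((hH.fst_lt_snd hd).trans (hH.snd_lt_length hd)) g₁]

theorem outerCD₂_comm (hH : IsCut l H) {c d : ℕ × ℕ} (hc : c ∈ H) (hd : d ∈ H)
    (h : c.2 < d.1 ∨ d.2 < c.1) : outerCD₂ k s t v l H c d = outerCD₂ k s t v l H d c := by
  rw [outerCD₂, outerCD₂, outerCD, outerCD, outerArrows_outerArrows_comm hH hc hd h,
    outsideCut_outsideCut_comm hH hc hd h]

variable (k s t v l H) in
/-- The contribution of the pairs of disjoint chords to the coassociator. -/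
def disjointSum : ChRt k s t ⊗[k] (ChRt k s t ⊗[k] ChRt k s t) :=
  ∑ c ∈ H, ∑ d ∈ H with c.2 < d.1 ∨ d.2 < c.1, (epsFactor k l c * epsFactor k l d) •
    (innerCD k s t v l H c ⊗ₜ[k] (innerCD k s t v l H d ⊗ₜ[k] outerCD₂ k s t v l H c d))

theorem tau12_disjointSum (hH : IsCut l H) :
    tau12 k (ChRt k s t) (disjointSum k s t v l H) = disjointSum k s t v l H := by
  have hτ : tau12 k (ChRt k s t) (disjointSum k s t v l H) =
      ∑ c ∈ H, ∑ d ∈ H with c.2 < d.1 ∨ d.2 < c.1, (epsFactor k l c * epsFactor k l d) •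
        (innerCD k s t v l H d ⊗ₜ[k]
          (innerCD k s t v l H c ⊗ₜ[k] outerCD₂ k s t v l H c d)) := by
    refine (map_sum _ _ _).trans (Finset.sum_congr rfl fun c _ => ?_)
    refine (map_sum _ _ _).trans (Finset.sum_congr rfl fun d _ => ?_)
    exact map_smul _ _ _
  rw [hτ, disjointSum]
  simp only [Finset.sum_filter]
  rw [Finset.sum_comm]
  refine Finset.sum_congr rfl fun c hc => ?_
  rw [← Finset.sum_filter, ← Finset.sum_filter]
  refine Finset.sum_congr (by simp only [or_comm]) fun d hd => ?_
  obtain ⟨hd, h⟩ := Finset.mem_filter.1 hd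
  rw [mul_comm, outerCD₂_comm hH hd hc h.symm]

/-- The pairs of nested chords cancel in the coassociator of `deltaCh`. -/
theorem coassociator_mkCD (hl : IsPathFrom s t v l) (hH : IsCut l H) :
    TensorProduct.assoc k (ChRt k s t) (ChRt k s t) (ChRt k s t)
        (LinearMap.rTensor (ChRt k s t) (deltaCh k s t) (deltaCh k s t (mkCD k s t v l H))) +
        disjointSum k s t v l H =
      LinearMap.lTensor (ChRt k s t) (deltaCh k s t) (deltaCh k s t (mkCD k s t v l H)) := by
  have hnested : ∑ c ∈ H, ∑ d ∈ H with c.1 < d.1 ∧ d.2 < c.2,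
      (epsFactor k l c * epsFactor k l d) • (innerCD k s t v l H d ⊗ₜ[k]
        (midCD k s t v l H d c ⊗ₜ[k] outerCD k s t v l H c)) =
      ∑ c ∈ H, ∑ d ∈ H with d.1 < c.1 ∧ c.2 < d.2,
      (epsFactor k l c * epsFactor k l d) • (innerCD k s t v l H c ⊗ₜ[k]
        (midCD k s t v l H c d ⊗ₜ[k] outerCD k s t v l H d)) := by
    simp only [Finset.sum_filter]
    rw [Finset.sum_comm]
    simp only [mul_comm]
  have hr : TensorProduct.assoc k (ChRt k s t) (ChRt k s t) (ChRt k s t)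
      (LinearMap.rTensor (ChRt k s t) (deltaCh k s t) (deltaCh k s t (mkCD k s t v l H))) =
      ∑ c ∈ H, ∑ d ∈ H with c.1 < d.1 ∧ d.2 < c.2,
      (epsFactor k l c * epsFactor k l d) • (innerCD k s t v l H d ⊗ₜ[k]
        (midCD k s t v l H d c ⊗ₜ[k] outerCD k s t v l H c)) := by
    rw [deltaCh_mkCD hl hH, map_sum, map_sum]
    refine Finset.sum_congr rfl fun c hc => ?_
    simp only [map_smul, LinearMap.rTensor_tmul,
      deltaCh_innerCD hl hH hc, TensorProduct.sum_tmul, map_sum, TensorProduct.smul_tmul',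
      TensorProduct.assoc_tmul, Finset.smul_sum, mul_smul]
  rw [hr, hnested, disjointSum, deltaCh_mkCD hl hH, map_sum, ← Finset.sum_add_distrib]
  refine Finset.sum_congr rfl fun c hc => ?_
  simp only [map_smul, LinearMap.lTensor_tmul, deltaCh_outerCD hl hH hc, TensorProduct.tmul_add,
    TensorProduct.tmul_sum, TensorProduct.tmul_smul, smul_add, Finset.smul_sum, mul_smul]

theorem span_range_mkCD : Submodule.span k
    (Set.range fun x : PCD s t => mkCD k s t x.1.1.src x.1.1.arrows x.1.2) = ⊤ := by
  rw [funext mkCD_eq_single, ← Finsupp.coe_basisSingleOne]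
  exact Finsupp.basisSingleOne.span_eq

end Comultiplication

/-- `(Ch_rt, δ_{p,rt})` is a pre-Lie coalgebra. -/
theorem deltaCh_isPreLieComul : IsPreLieComul (deltaCh k s t) := by
  exact isPreLieComul_of_span_eq_top span_range_mkCD
    (fun x => disjointSum k s t x.1.1.src x.1.1.arrows x.1.2)
    (fun x => coassociator_mkCD x.1.1.valid x.2) (fun x => tau12_disjointSum x.2)

end
end
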